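/- In the setting of the previous realization theorem (exact cyclic six-term sequence G1 → G2 → G3 →0 F1 → F2 → F3 → G1 with F1, F2, F3 free, realized at the ends by row-finite matrices A ∈ M_{I×I'}(ℤ) and B ∈ M_{J×J'}(ℤ) via isomorphisms α1, β1, α3, β3): if additionally there exists a row-finite matrix A' ∈ M_{I'×I}(ℤ) such that every entry of the matrix A'A − 1 is nonnegative (where 1 denotes the identity matrix on I', and the product A'A is entrywise defined since A' is row-finite), then the row-finite matrix Y ∈ M_{J×I'}(ℤ) in the conclusion can be chosen so that all entries of Y are nonnegative. If furthermore a row-finite matrix Z ∈ M_{J×I'}(ℤ) is given, then Y can be chosen so that every entry of Y − Z is nonnegative. -/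

import Mathlib

/-- An integer matrix `D ∈ M_{S×T}(ℤ)` (a function `S × T → ℤ`) is *row-finite* if each
of its rows has only finitely many nonzero entries. -/
def RowFinite {S T : Type*} (D : S → T → ℤ) : Prop :=
  ∀ s : S, {t : T | D s t ≠ 0}.Finite

/-- The `s`-th row of a row-finite matrix, as a finitely supported vector. -/
noncomputable def rowFinsupp {S T : Type*} {D : S → T → ℤ} (hD : RowFinite D) (s : S) :
    T →₀ ℤ :=
  ⟨(hD s).toFinset, D s, fun _ => (hD s).mem_toFinset⟩

/-- The homomorphism `ℤ^(S) → ℤ^(T)`, `v ↦ v·D`, given by the right action of a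
row-finite matrix `D` on finitely supported vectors: `(v·D)(t) = Σ_s v(s)·D(s,t)`. -/
noncomputable def matHom {S T : Type*} {D : S → T → ℤ} (hD : RowFinite D) :
    (S →₀ ℤ) →ₗ[ℤ] (T →₀ ℤ) :=
  Finsupp.lsum ℤ fun s => LinearMap.toSpanSingleton ℤ (T →₀ ℤ) (rowFinsupp hD s)

/-- The block matrix `(A 0; Y B)`. -/
def blockMat {I I' J J' : Type*} (A : I → I' → ℤ) (B : J → J' → ℤ) (Y : J → I' → ℤ) :
    I ⊕ J → I' ⊕ J' → ℤ
  | Sum.inl i, Sum.inl i' => A i i'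
  | Sum.inl _, Sum.inr _ => 0
  | Sum.inr j, Sum.inl i' => Y j i'
  | Sum.inr j, Sum.inr j' => B j j'

/-- The block matrix of row-finite matrices is row-finite. -/
theorem blockMat_rowFinite {I I' J J' : Type*} {A : I → I' → ℤ} {B : J → J' → ℤ}
    {Y : J → I' → ℤ} (hA : RowFinite A) (hB : RowFinite B) (hY : RowFinite Y) :
    RowFinite (blockMat A B Y) := by
  rintro (i | j)
  · apply Set.Finite.subset ((hA i).image Sum.inl)
    rintro (i' | j') ht
    · exact ⟨i', ht, rfl⟩
    · exact absurd rfl ht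
  · apply Set.Finite.subset (((hY j).image Sum.inl).union ((hB j).image Sum.inr))
    rintro (i' | j') ht
    · exact Or.inl ⟨i', ht, rfl⟩
    · exact Or.inr ⟨j', ht, rfl⟩

/-- Projection `ℤ^(α⊔β) → ℤ^(β)` forgetting the `α`-coordinates. -/
noncomputable def projR {α β : Type*} (w : α ⊕ β →₀ ℤ) : β →₀ ℤ :=
  (Finsupp.sumFinsuppAddEquivProdFinsupp w).2

/-- `RealizesSixTerm ε γ ε' γ' δ hA hB α1 β1 α3 β3 Y hY` says: there are isomorphisms
`α2 : coker (A 0; Y B) ≃ G2` and `β2 : ker (A 0; Y B) ≃ F2` such that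
`(α1, α2, α3, β1, β2, β3)` is an isomorphism of cyclic complexes from the six-term
sequence `coker A →I coker M →P coker B →0 ker A →I' ker M →P' ker B →[Y] coker A`
(maps induced by the inclusions/projections of `ℤ^(I⊔J)` and `ℤ^(I'⊔J')`, and
`[Y] v = [v·Y]`) to the sequence `G1 →ε G2 →γ G3 →0 F1 →ε' F2 →γ' F3 →δ G1`. -/
def RealizesSixTerm {I I' J J' : Type*} {G1 G2 G3 F1 F2 F3 : Type*}
    [AddCommGroup G1] [AddCommGroup G2] [AddCommGroup G3]
    [AddCommGroup F1] [AddCommGroup F2] [AddCommGroup F3]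
    (ε : G1 →+ G2) (γ : G2 →+ G3) (ε' : F1 →+ F2) (γ' : F2 →+ F3) (δ : F3 →+ G1)
    {A : I → I' → ℤ} {B : J → J' → ℤ} (hA : RowFinite A) (hB : RowFinite B)
    (α1 : ((I' →₀ ℤ) ⧸ LinearMap.range (matHom hA)) ≃+ G1)
    (β1 : ↥(LinearMap.ker (matHom hA)) ≃+ F1)
    (α3 : ((J' →₀ ℤ) ⧸ LinearMap.range (matHom hB)) ≃+ G3)
    (β3 : ↥(LinearMap.ker (matHom hB)) ≃+ F3)
    (Y : J → I' → ℤ) (hY : RowFinite Y) : Prop :=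
  ∃ (α2 : ((I' ⊕ J' →₀ ℤ) ⧸
      LinearMap.range (matHom (blockMat_rowFinite hA hB hY))) ≃+ G2)
    (β2 : ↥(LinearMap.ker (matHom (blockMat_rowFinite hA hB hY))) ≃+ F2),
    -- the matrix-side maps are well defined:
    (∀ v : ↥(LinearMap.ker (matHom hA)),
      matHom (blockMat_rowFinite hA hB hY) (Finsupp.mapDomain Sum.inl (v : I →₀ ℤ)) = 0) ∧
    (∀ w : ↥(LinearMap.ker (matHom (blockMat_rowFinite hA hB hY))),
      matHom hB (projR (w : I ⊕ J →₀ ℤ)) = 0) ∧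
    (∀ v : I →₀ ℤ, ∃ w : I ⊕ J →₀ ℤ,
      matHom (blockMat_rowFinite hA hB hY) w = Finsupp.mapDomain Sum.inl (matHom hA v)) ∧
    (∀ w : I ⊕ J →₀ ℤ, ∃ v : J →₀ ℤ,
      matHom hB v = projR (matHom (blockMat_rowFinite hA hB hY) w)) ∧
    -- the square for `I : coker A → coker M` against `ε : G1 → G2`
    (∀ u : I' →₀ ℤ,
      α2 (Submodule.Quotient.mk (Finsupp.mapDomain Sum.inl u)) =
        ε (α1 (Submodule.Quotient.mk u))) ∧
    -- the square for `P : coker M → coker B` against `γ : G2 → G3`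
    (∀ w' : I' ⊕ J' →₀ ℤ,
      α3 (Submodule.Quotient.mk (projR w')) = γ (α2 (Submodule.Quotient.mk w'))) ∧
    -- the square for `I' : ker A → ker M` against `ε' : F1 → F2`
    (∀ (v : ↥(LinearMap.ker (matHom hA)))
        (w : ↥(LinearMap.ker (matHom (blockMat_rowFinite hA hB hY)))),
      (w : I ⊕ J →₀ ℤ) = Finsupp.mapDomain Sum.inl (v : I →₀ ℤ) →
      β2 w = ε' (β1 v)) ∧
    -- the square for `P' : ker M → ker B` against `γ' : F2 → F3`
    (∀ (w : ↥(LinearMap.ker (matHom (blockMat_rowFinite hA hB hY))))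
        (v : ↥(LinearMap.ker (matHom hB))),
      (v : J →₀ ℤ) = projR (w : I ⊕ J →₀ ℤ) →
      β3 v = γ' (β2 w)) ∧
    -- the square for `[Y] : ker B → coker A` against `δ : F3 → G1`
    (∀ v : ↥(LinearMap.ker (matHom hB)),
      α1 (Submodule.Quotient.mk (matHom hY (v : J →₀ ℤ))) = δ (β3 v))

section Helpers

noncomputable def projLl (α β : Type*) : (α ⊕ β →₀ ℤ) →ₗ[ℤ] (α →₀ ℤ) :=
  LinearMap.fst ℤ _ _ ∘ₗ (Finsupp.sumFinsuppLEquivProdFinsupp ℤ).toLinearMap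

noncomputable def projRl (α β : Type*) : (α ⊕ β →₀ ℤ) →ₗ[ℤ] (β →₀ ℤ) :=
  LinearMap.snd ℤ _ _ ∘ₗ (Finsupp.sumFinsuppLEquivProdFinsupp ℤ).toLinearMap

theorem projR_eq {α β : Type*} (w : α ⊕ β →₀ ℤ) : projR w = projRl α β w := rfl

theorem projLl_apply {α β : Type*} (w : α ⊕ β →₀ ℤ) (a : α) :
    projLl α β w a = w (Sum.inl a) := rfl

theorem projRl_apply {α β : Type*} (w : α ⊕ β →₀ ℤ) (b : β) :
    projRl α β w b = w (Sum.inr b) := rfl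

theorem sum_ext {α β : Type*} {w w' : α ⊕ β →₀ ℤ} (h1 : projLl α β w = projLl α β w')
    (h2 : projRl α β w = projRl α β w') : w = w' := by
  ext (a | b)
  · exact DFunLike.congr_fun h1 a
  · exact DFunLike.congr_fun h2 b

theorem projLl_inl {α β : Type*} (u : α →₀ ℤ) :
    projLl α β (Finsupp.mapDomain Sum.inl u) = u := by
  ext a
  rw [projLl_apply, Finsupp.mapDomain_apply Sum.inl_injective]

theorem projRl_inl {α β : Type*} (u : α →₀ ℤ) :
    projRl α β (Finsupp.mapDomain Sum.inl u) = 0 := by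
  ext a
  rw [projRl_apply, Finsupp.mapDomain_of_notMem_range]
  · rfl
  · simp

theorem projRl_inr {α β : Type*} (u : β →₀ ℤ) :
    projRl α β (Finsupp.mapDomain Sum.inr u) = u := by
  ext a
  rw [projRl_apply, Finsupp.mapDomain_apply Sum.inr_injective]

theorem projLl_inr {α β : Type*} (u : β →₀ ℤ) :
    projLl α β (Finsupp.mapDomain Sum.inr u) = 0 := by
  ext a
  rw [projLl_apply, Finsupp.mapDomain_of_notMem_range]
  · rfl
  · simp

theorem matHom_single {S T : Type*} {D : S → T → ℤ} (hD : RowFinite D) (s : S) :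
    matHom hD (Finsupp.single s 1) = rowFinsupp hD s := by
  simp [matHom]

theorem rowFinsupp_apply {S T : Type*} {D : S → T → ℤ} (hD : RowFinite D) (s : S) (t : T) :
    rowFinsupp hD s t = D s t := rfl

section
variable {I I' J J' : Type*} {A : I → I' → ℤ} {B : J → J' → ℤ} {Y : J → I' → ℤ}
  (hA : RowFinite A) (hB : RowFinite B) (hY : RowFinite Y)

theorem projRl_block (w : I ⊕ J →₀ ℤ) :
    projRl I' J' (matHom (blockMat_rowFinite hA hB hY) w) = matHom hB (projRl I J w) := by
  have : projRl I' J' ∘ₗ matHom (blockMat_rowFinite hA hB hY) = matHom hB ∘ₗ projRl I J := by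
    apply Finsupp.lhom_ext'
    rintro (i | j)
    · apply LinearMap.ext_ring
      have h : projRl I J (Finsupp.single (Sum.inl i) 1) = 0 := by
        rw [← Finsupp.mapDomain_single, projRl_inl]
      ext t
      simp [matHom_single, h, projRl_apply, rowFinsupp_apply, blockMat]
    · apply LinearMap.ext_ring
      have h : projRl I J (Finsupp.single (Sum.inr j) 1) = Finsupp.single j 1 := by
        rw [← Finsupp.mapDomain_single, projRl_inr]
      ext t
      simp [matHom_single, h, projRl_apply, rowFinsupp_apply, blockMat]
  exact LinearMap.congr_fun this w

theorem projLl_block (w : I ⊕ J →₀ ℤ) :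
    projLl I' J' (matHom (blockMat_rowFinite hA hB hY) w)
      = matHom hA (projLl I J w) + matHom hY (projRl I J w) := by
  have : projLl I' J' ∘ₗ matHom (blockMat_rowFinite hA hB hY)
      = matHom hA ∘ₗ projLl I J + matHom hY ∘ₗ projRl I J := by
    apply Finsupp.lhom_ext'
    rintro (i | j)
    · apply LinearMap.ext_ring
      have h : projRl I J (Finsupp.single (Sum.inl i) 1) = 0 := by
        rw [← Finsupp.mapDomain_single, projRl_inl]
      have h' : projLl I J (Finsupp.single (Sum.inl i) 1) = Finsupp.single i 1 := by
        rw [← Finsupp.mapDomain_single, projLl_inl]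
      ext t
      simp [matHom_single, h, h', projLl_apply, rowFinsupp_apply, blockMat]
    · apply LinearMap.ext_ring
      have h : projRl I J (Finsupp.single (Sum.inr j) 1) = Finsupp.single j 1 := by
        rw [← Finsupp.mapDomain_single, projRl_inr]
      have h' : projLl I J (Finsupp.single (Sum.inr j) 1) = 0 := by
        rw [← Finsupp.mapDomain_single, projLl_inr]
      ext t
      simp [matHom_single, h, h', projLl_apply, rowFinsupp_apply, blockMat]
  exact LinearMap.congr_fun this w
end

/-- Every vector is congruent modulo the range of `A` to one which is `≥ z`. -/
theorem exists_large {I I' : Type*} [DecidableEq I'] {A : I → I' → ℤ} (hA : RowFinite A)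
    (A' : I' → I → ℤ) (hA' : RowFinite A')
    (hpos : ∀ a b : I',
      0 ≤ (∑ i ∈ (hA' a).toFinset, A' a i * A i b) - (if a = b then 1 else 0))
    (u z : I' →₀ ℤ) : ∃ v : I →₀ ℤ, ∀ b, z b ≤ (u + matHom hA v) b := by
  have key : ∀ a b : I', (if a = b then 1 else 0) ≤ matHom hA (rowFinsupp hA' a) b := by
    intro a b
    have h : matHom hA (rowFinsupp hA' a) b = ∑ i ∈ (hA' a).toFinset, A' a i * A i b := by
      simp only [matHom, Finsupp.lsum_apply, Finsupp.sum, Finsupp.finsetSum_apply]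
      rfl
    have := hpos a b
    rw [h]; linarith
  let c : I' → ℤ := fun a => max (z a - u a) 0
  refine ⟨∑ a ∈ (z - u).support, c a • rowFinsupp hA' a, fun b => ?_⟩
  have h1 : matHom hA (∑ a ∈ (z - u).support, c a • rowFinsupp hA' a) b
      = ∑ a ∈ (z - u).support, c a * matHom hA (rowFinsupp hA' a) b := by
    simp [map_sum, Finsupp.finsetSum_apply]
  have h2 : ∑ a ∈ (z - u).support, c a * (if a = b then 1 else 0)
      ≤ ∑ a ∈ (z - u).support, c a * matHom hA (rowFinsupp hA' a) b :=
    Finset.sum_le_sum fun a _ => mul_le_mul_of_nonneg_left (key a b) (le_max_right _ _)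
  have h3 : z b - u b ≤ ∑ a ∈ (z - u).support, c a * (if a = b then 1 else 0) := by
    simp only [mul_ite, mul_one, mul_zero, Finset.sum_ite_eq']
    split_ifs with h
    · exact le_max_left _ _
    · have := Finsupp.notMem_support_iff.1 h
      simp at this
      linarith
  rw [Finsupp.add_apply, h1]
  linarith

/-- Comparison of two extensions of a projective module. -/
theorem exists_mid_equiv {M1 M2 P N1 N2 : Type*} [AddCommGroup M1] [AddCommGroup M2]
    [AddCommGroup P] [AddCommGroup N1] [AddCommGroup N2] [Module.Free ℤ P]
    (f : M1 →ₗ[ℤ] M2) (g : M2 →ₗ[ℤ] P) (f' : N1 →ₗ[ℤ] N2) (g' : N2 →ₗ[ℤ] P)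
    (hf : Function.Injective f) (hfg : ∀ m, g m = 0 ↔ ∃ x, f x = m)
    (hg : Function.Surjective g)
    (hf' : Function.Injective f') (hfg' : ∀ m, g' m = 0 ↔ ∃ x, f' x = m)
    (hg' : Function.Surjective g') (e : M1 ≃+ N1) :
    ∃ e2 : M2 ≃+ N2, (∀ x, e2 (f x) = f' (e x)) ∧ ∀ m, g' (e2 m) = g m := by
  obtain ⟨s, hs⟩ := Module.projective_lifting_property g LinearMap.id hg
  obtain ⟨s', hs'⟩ := Module.projective_lifting_property g' LinearMap.id hg'
  have hs : ∀ p, g (s p) = p := fun p => LinearMap.congr_fun hs p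
  have hs' : ∀ p, g' (s' p) = p := fun p => LinearMap.congr_fun hs' p
  have gf : ∀ x, g (f x) = 0 := fun x => (hfg _).2 ⟨x, rfl⟩
  have gf' : ∀ x, g' (f' x) = 0 := fun x => (hfg' _).2 ⟨x, rfl⟩
  let F : M1 × P →+ M2 := (f.coprod s).toAddMonoidHom
  let F' : M1 × P →+ N2 := ((f' ∘ₗ e.toIntLinearEquiv.toLinearMap).coprod s').toAddMonoidHom
  have hF : ∀ x p, F (x, p) = f x + s p := fun x p => by simp [F]
  have hF' : ∀ x p, F' (x, p) = f' (e x) + s' p := fun x p => by simp [F']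
  have bF : Function.Bijective F := by
    constructor
    · rw [injective_iff_map_eq_zero]
      rintro ⟨x, p⟩ h
      rw [hF] at h
      have hp : p = 0 := by simpa [gf, hs] using congrArg g h
      subst hp
      simp only [map_zero, add_zero] at h
      simp [(map_eq_zero_iff f hf).1 h]
    · intro m
      obtain ⟨x, hx⟩ := (hfg (m - s (g m))).1 (by simp [hs])
      exact ⟨(x, g m), by rw [hF, hx]; abel⟩
  have bF' : Function.Bijective F' := by
    constructor
    · rw [injective_iff_map_eq_zero]
      rintro ⟨x, p⟩ h
      rw [hF'] at h
      have hp : p = 0 := by simpa [gf', hs'] using congrArg g' h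
      subst hp
      simp only [map_zero, add_zero] at h
      simpa using (map_eq_zero_iff f' hf').1 h
    · intro m
      obtain ⟨x, hx⟩ := (hfg' (m - s' (g' m))).1 (by simp [hs'])
      exact ⟨(e.symm x, g' m), by rw [hF', e.apply_symm_apply, hx]; abel⟩
  let E := AddEquiv.ofBijective F bF
  let E' := AddEquiv.ofBijective F' bF'
  have hE : ∀ y, (E.symm.trans E') (F y) = F' y := by
    intro y
    change E' (E.symm (E y)) = F' y
    rw [E.symm_apply_apply]; rfl
  refine ⟨E.symm.trans E', fun x => ?_, fun m => ?_⟩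
  · have := hE (x, 0)
    rw [hF, hF'] at this
    simpa using this
  · obtain ⟨⟨x, p⟩, rfl⟩ := bF.2 m
    rw [hE, hF, hF']
    simp [gf, gf', hs, hs']

theorem free_submodule_finsupp {ι : Type*} (N : Submodule ℤ (ι →₀ ℤ)) : Module.Free ℤ N := by
  classical
  obtain ⟨_, _⟩ := exists_wellOrder ι
  have step : ∀ i : ι, ∃ x : N, (∀ j, i < j → x.1 j = 0) ∧
      ∀ y : N, (∀ j, i < j → y.1 j = 0) → x.1 i ∣ y.1 i := by
    intro i
    let K : Submodule ℤ N :=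
      { carrier := {y | ∀ j, i < j → y.1 j = 0}
        add_mem' := fun {a b} ha hb j hj => by simp [ha j hj, hb j hj]
        zero_mem' := fun j _ => rfl
        smul_mem' := fun c a ha j hj => by simp [ha j hj] }
    let D : Submodule ℤ ℤ := K.map (Finsupp.lapply i ∘ₗ N.subtype)
    obtain ⟨d, hd⟩ := (IsPrincipalIdealRing.principal D).principal
    have hdD : d ∈ D := by rw [hd]; exact Submodule.mem_span_singleton_self d
    obtain ⟨x, hxK, hx⟩ := hdD
    refine ⟨x, hxK, fun y hy => ?_⟩
    have hyD : y.1 i ∈ D := ⟨y, hy, rfl⟩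
    rw [hd, Submodule.mem_span_singleton] at hyD
    obtain ⟨c, hc⟩ := hyD
    have hx' : x.1 i = d := hx
    exact ⟨c, by rw [hx', ← hc, smul_eq_mul, mul_comm]⟩
  choose x hx1 hx2 using step
  let S : Set ι := {i | (x i).1 i ≠ 0}
  let b : S → N := fun i => x i
  have hli : LinearIndependent ℤ b := by
    rw [linearIndependent_iff]
    intro l hl
    by_contra hne
    have hs : l.support.Nonempty := Finsupp.support_nonempty_iff.2 hne
    let m := l.support.max' hs
    have hm : m ∈ l.support := Finset.max'_mem _ _
    have h1 : (Finsupp.lapply (m : ι) ∘ₗ N.subtype) (Finsupp.linearCombination ℤ b l) = 0 := by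
      rw [hl, map_zero]
    rw [Finsupp.linearCombination_apply, Finsupp.sum, map_sum, Finset.sum_eq_single m] at h1
    · have h2 : l m * (x m).1 m = 0 := h1
      rcases mul_eq_zero.1 h2 with h | h
      · exact Finsupp.mem_support_iff.1 hm h
      · exact m.2 h
    · intro i hi him
      have hlt : (i : ι) < m := lt_of_le_of_ne (Finset.le_max' _ _ hi) fun h => him (Subtype.ext h)
      have : (x i).1 m = 0 := hx1 i m hlt
      change l i * (x i).1 m = 0
      rw [this, mul_zero]
    · exact fun h => (h hm).elim
  have hsp : ∀ i : ι, ∀ y : N, (∀ j, i < j → y.1 j = 0) →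
      y ∈ Submodule.span ℤ (Set.range b) := by
    intro i
    induction i using WellFoundedLT.induction with
    | ind i ih =>
      intro y hy
      obtain ⟨c, hc⟩ := hx2 i y hy
      have hmem : c • x i ∈ Submodule.span ℤ (Set.range b) := by
        by_cases h : (x i).1 i = 0
        · by_cases hc0 : x i = 0
          · rw [hc0, smul_zero]; exact zero_mem _
          · have hne : (x i).1.support.Nonempty :=
              Finsupp.support_nonempty_iff.2 fun h => hc0 (Subtype.ext h)
            have hmm := Finset.max'_mem _ hne
            refine Submodule.smul_mem _ _ (ih ((x i).1.support.max' hne) ?_ (x i) ?_)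
            · by_contra hlt
              rcases eq_or_lt_of_le (not_lt.1 hlt) with h' | h'
              · rw [← h'] at hmm
                exact Finsupp.mem_support_iff.1 hmm h
              · exact Finsupp.mem_support_iff.1 hmm (hx1 i _ h')
            · intro j hj
              by_contra hj'
              exact absurd (Finset.le_max' _ j (Finsupp.mem_support_iff.2 hj')) (not_le.2 hj)
        · exact Submodule.smul_mem _ _ (Submodule.subset_span ⟨⟨i, h⟩, rfl⟩)
      have hz0 : (y - c • x i).1 i = 0 := by
        simp [hc, mul_comm]
      have hz1 : ∀ j, i < j → (y - c • x i).1 j = 0 := fun j hj => by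
        simp [hy j hj, hx1 i j hj]
      have hz : y - c • x i ∈ Submodule.span ℤ (Set.range b) := by
        by_cases hc0 : y - c • x i = 0
        · rw [hc0]; exact zero_mem _
        · have hne : (y - c • x i).1.support.Nonempty :=
            Finsupp.support_nonempty_iff.2 fun h => hc0 (Subtype.ext h)
          have hmm := Finset.max'_mem _ hne
          refine ih ((y - c • x i).1.support.max' hne) ?_ _ ?_
          · by_contra hlt
            rcases eq_or_lt_of_le (not_lt.1 hlt) with h' | h'
            · rw [← h'] at hmm
              exact Finsupp.mem_support_iff.1 hmm hz0
            · exact Finsupp.mem_support_iff.1 hmm (hz1 _ h')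
          · intro j hj
            by_contra hj'
            exact absurd (Finset.le_max' _ j (Finsupp.mem_support_iff.2 hj')) (not_le.2 hj)
      have := add_mem hz hmem
      rwa [sub_add_cancel] at this
  refine Module.Free.of_basis (Module.Basis.mk hli fun y _ => ?_)
  by_cases hy : y = 0
  · rw [hy]; exact zero_mem _
  · have hne : y.1.support.Nonempty :=
      Finsupp.support_nonempty_iff.2 fun h => hy (Subtype.ext h)
    refine hsp (y.1.support.max' hne) y fun j hj => ?_
    by_contra hj'
    exact absurd (Finset.le_max' _ j (Finsupp.mem_support_iff.2 hj')) (not_le.2 hj)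

theorem free_submodule {M : Type*} [AddCommGroup M] (hM : Module.Free ℤ M)
    (N : Submodule ℤ M) : Module.Free ℤ N := by
  let e := (Module.Free.chooseBasis ℤ M).repr
  have := free_submodule_finsupp (N.map e.toLinearMap)
  exact Module.Free.of_equiv (e.submoduleMap N).symm

end Helpers

theorem realization_core {I I' J J' : Type*}
    {G1 G2 G3 F1 F2 F3 : Type*}
    [AddCommGroup G1] [AddCommGroup G2] [AddCommGroup G3]
    [AddCommGroup F1] [AddCommGroup F2] [AddCommGroup F3]
    (hF3 : Module.Free ℤ F3)
    (ε : G1 →+ G2) (γ : G2 →+ G3) (ε' : F1 →+ F2) (γ' : F2 →+ F3) (δ : F3 →+ G1)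
    (hexG2 : Function.Exact ⇑ε ⇑γ)
    (hγ : Function.Surjective γ)
    (hε' : Function.Injective ε')
    (hexF2 : Function.Exact ⇑ε' ⇑γ')
    (hexF3 : Function.Exact ⇑γ' ⇑δ)
    (hexG1 : Function.Exact ⇑δ ⇑ε)
    {A : I → I' → ℤ} {B : J → J' → ℤ} (hA : RowFinite A) (hB : RowFinite B)
    (α1 : ((I' →₀ ℤ) ⧸ LinearMap.range (matHom hA)) ≃+ G1)
    (β1 : ↥(LinearMap.ker (matHom hA)) ≃+ F1)
    (α3 : ((J' →₀ ℤ) ⧸ LinearMap.range (matHom hB)) ≃+ G3)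
    (β3 : ↥(LinearMap.ker (matHom hB)) ≃+ F3)
    (Z : J → I' → ℤ) (hZ : RowFinite Z)
    (hlarge : ∀ u z : I' →₀ ℤ, ∃ v : I →₀ ℤ, ∀ b, z b ≤ (u + matHom hA v) b) :
    ∃ (Y : J → I' → ℤ) (hY : RowFinite Y), (∀ j i', 0 ≤ Y j i' - Z j i') ∧
      RealizesSixTerm ε γ ε' γ' δ hA hB α1 β1 α3 β3 Y hY := by
  have free1 : Module.Free ℤ (LinearMap.range (matHom hB)) := free_submodule_finsupp _
  have free2 : Module.Free ℤ (LinearMap.ker δ.toIntLinearMap) := free_submodule hF3 _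
  -- lift of the projection to `G3`
  let p1 : (I' →₀ ℤ) →ₗ[ℤ] G1 :=
    α1.toIntLinearEquiv.toLinearMap ∘ₗ (LinearMap.range (matHom hA)).mkQ
  let p3 : (J' →₀ ℤ) →ₗ[ℤ] G3 :=
    α3.toIntLinearEquiv.toLinearMap ∘ₗ (LinearMap.range (matHom hB)).mkQ
  have p1_def : ∀ u, p1 u = α1 (Submodule.Quotient.mk u) := fun _ => rfl
  have p3_def : ∀ u, p3 u = α3 (Submodule.Quotient.mk u) := fun _ => rfl
  have p1_surj : Function.Surjective p1 := fun x => by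
    obtain ⟨u, hu⟩ := Submodule.Quotient.mk_surjective _ (α1.symm x)
    exact ⟨u, by rw [p1_def, hu, α1.apply_symm_apply]⟩
  have p3_surj : Function.Surjective p3 := fun x => by
    obtain ⟨u, hu⟩ := Submodule.Quotient.mk_surjective _ (α3.symm x)
    exact ⟨u, by rw [p3_def, hu, α3.apply_symm_apply]⟩
  have p1_zero : ∀ u, p1 u = 0 ↔ ∃ v, matHom hA v = u := fun u => by
    rw [p1_def, map_eq_zero_iff α1 α1.injective, Submodule.Quotient.mk_eq_zero]; rfl
  have p3_zero : ∀ u, p3 u = 0 ↔ ∃ v, matHom hB v = u := fun u => by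
    rw [p3_def, map_eq_zero_iff α3 α3.injective, Submodule.Quotient.mk_eq_zero]; rfl
  obtain ⟨φ, hφ⟩ := Module.projective_lifting_property γ.toIntLinearMap p3 hγ
  have hφ : ∀ x, γ (φ x) = p3 x := fun x => LinearMap.congr_fun hφ x
  -- lift of `φ` on the range of `B`
  have hφr : ∀ l : LinearMap.range (matHom hB), φ l ∈ LinearMap.ker γ.toIntLinearMap := by
    rintro ⟨l, hl⟩
    rw [LinearMap.mem_ker]
    exact (hφ l).trans ((p3_zero l).2 hl)
  let εr : G1 →ₗ[ℤ] LinearMap.ker γ.toIntLinearMap :=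
    ε.toIntLinearMap.codRestrict _ fun x => (hexG2 _).2 ⟨x, rfl⟩
  have εr_surj : Function.Surjective εr := by
    rintro ⟨y, hy⟩
    obtain ⟨x, hx⟩ := (hexG2 y).1 hy
    exact ⟨x, Subtype.ext hx⟩
  let φr : LinearMap.range (matHom hB) →ₗ[ℤ] LinearMap.ker γ.toIntLinearMap :=
    (φ ∘ₗ (LinearMap.range (matHom hB)).subtype).codRestrict _ hφr
  obtain ⟨h, hh⟩ := Module.projective_lifting_property εr φr εr_surj
  have hh : ∀ l, ε (h l) = φ l := fun l => congrArg Subtype.val (LinearMap.congr_fun hh l)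
  let b' := (matHom hB).rangeRestrict
  obtain ⟨s, hs⟩ := Module.projective_lifting_property b' LinearMap.id
    (matHom hB).surjective_rangeRestrict
  have hs : ∀ l, matHom hB (s l) = l := fun l => congrArg Subtype.val (LinearMap.congr_fun hs l)
  let k : (J →₀ ℤ) →ₗ[ℤ] LinearMap.ker (matHom hB) :=
    (LinearMap.id - s ∘ₗ b').codRestrict _ fun x => by
      simp [hs, b']
  let q : (J →₀ ℤ) →ₗ[ℤ] G1 :=
    δ.toIntLinearMap ∘ₗ β3.toIntLinearEquiv.toLinearMap ∘ₗ k - h ∘ₗ b'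
  have hq : ∀ x, q x = δ (β3 (k x)) - h (b' x) := fun _ => rfl
  have εδ : ∀ x, ε (δ x) = 0 := fun x => (hexG1 _).2 ⟨x, rfl⟩
  have εq : ∀ x, ε (q x) = - φ (matHom hB x) := fun x => by
    rw [hq, map_sub, εδ, hh, zero_sub]; rfl
  have qK : ∀ v : LinearMap.ker (matHom hB), q v = δ (β3 v) := fun v => by
    have hb : b' v = 0 := Subtype.ext v.2
    have hk : k v = v := Subtype.ext (by simp [k, hb])
    rw [hq, hb, hk, map_zero, sub_zero]
  -- the matrix `Y`
  have rows : ∀ j : J, ∃ y : I' →₀ ℤ, p1 y = q (Finsupp.single j 1) ∧ ∀ b, Z j b ≤ y b := by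
    intro j
    obtain ⟨u, hu⟩ := p1_surj (q (Finsupp.single j 1))
    obtain ⟨v, hv⟩ := hlarge u (rowFinsupp hZ j)
    refine ⟨u + matHom hA v, ?_, hv⟩
    rw [map_add, hu, (p1_zero _).2 ⟨v, rfl⟩, add_zero]
  choose y hy1 hy2 using rows
  have hY : RowFinite (fun j i' => y j i') := fun j => (y j).hasFiniteSupport
  have hrow : ∀ j, rowFinsupp hY j = y j := fun j => Finsupp.ext fun _ => rfl
  have p1Y : ∀ x, p1 (matHom hY x) = q x := by
    have : p1 ∘ₗ matHom hY = q := by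
      apply Finsupp.lhom_ext'
      intro j
      apply LinearMap.ext_ring
      simp [matHom_single, hrow, hy1]
    exact fun x => LinearMap.congr_fun this x
  refine ⟨_, hY, fun j i' => sub_nonneg.2 (hy2 j i'), ?_⟩
  -- the middle cokernel
  let Φ : (I' ⊕ J' →₀ ℤ) →ₗ[ℤ] G2 :=
    ε.toIntLinearMap ∘ₗ p1 ∘ₗ projLl I' J' + φ ∘ₗ projRl I' J'
  have hΦ : ∀ w, Φ w = ε (p1 (projLl I' J' w)) + φ (projRl I' J' w) := fun _ => rfl
  have γε : ∀ x, γ (ε x) = 0 := fun x => (hexG2 _).2 ⟨x, rfl⟩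
  have γΦ : ∀ w, γ (Φ w) = p3 (projRl I' J' w) := fun w => by
    rw [hΦ, map_add, γε, hφ, zero_add]
  have Φ_surj : Function.Surjective Φ := by
    intro g
    obtain ⟨x, hx⟩ := p3_surj (γ g)
    obtain ⟨t, ht⟩ := (hexG2 (g - φ x)).1 (by rw [map_sub, hφ, hx, sub_self])
    obtain ⟨u, hu⟩ := p1_surj t
    refine ⟨Finsupp.mapDomain Sum.inl u + Finsupp.mapDomain Sum.inr x, ?_⟩
    rw [hΦ]
    simp only [map_add, projLl_inl, projLl_inr, projRl_inl, projRl_inr, map_zero]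
    rw [hu, ht]
    abel
  have hM : LinearMap.range (matHom (blockMat_rowFinite hA hB hY)) = LinearMap.ker Φ := by
    apply le_antisymm
    · rintro _ ⟨w, rfl⟩
      rw [LinearMap.mem_ker, hΦ, projLl_block hA hB hY, projRl_block hA hB hY, map_add, p1Y,
        (p1_zero _).2 ⟨_, rfl⟩, zero_add, εq, neg_add_cancel]
    · intro w hw
      rw [LinearMap.mem_ker] at hw
      have h3 : p3 (projRl I' J' w) = 0 := by rw [← γΦ, hw, map_zero]
      obtain ⟨x, hx⟩ := (p3_zero _).1 h3
      have h4 : ε (p1 (projLl I' J' w) - q x) = 0 := by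
        rw [map_sub, εq, hx, sub_neg_eq_add, ← hΦ, hw]
      obtain ⟨t, ht⟩ := (hexG1 _).1 h4
      obtain ⟨v, rfl⟩ := β3.surjective t
      rw [← qK] at ht
      obtain ⟨r, hr⟩ := (p1_zero (projLl I' J' w - matHom hY (x + v))).1 (by
        rw [map_sub, p1Y, map_add, ht]; abel)
      refine ⟨Finsupp.mapDomain Sum.inl r + Finsupp.mapDomain Sum.inr (x + (v : J →₀ ℤ)), ?_⟩
      have hv : matHom hB v = 0 := v.2
      apply sum_ext
      · rw [projLl_block hA hB hY, map_add (projLl I J), map_add (projRl I J), projLl_inl, projLl_inr,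
          projRl_inl, projRl_inr, add_zero, zero_add, hr]
        abel
      · rw [projRl_block hA hB hY, map_add (projRl I J),
          projRl_inl, projRl_inr, zero_add, map_add, hv, hx, add_zero]
  let α2 := ((Submodule.quotEquivOfEq _ _ hM).trans
    (Φ.quotKerEquivOfSurjective Φ_surj)).toAddEquiv
  have hα2 : ∀ w, α2 (Submodule.Quotient.mk w) = Φ w := fun w => rfl
  -- the middle kernel
  let f : LinearMap.ker (matHom hA) →ₗ[ℤ]
      LinearMap.ker (matHom (blockMat_rowFinite hA hB hY)) :=
    (Finsupp.lmapDomain ℤ ℤ Sum.inl ∘ₗ (LinearMap.ker (matHom hA)).subtype).codRestrict _ (by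
      rintro ⟨v, hv⟩
      rw [LinearMap.mem_ker] at hv ⊢
      apply sum_ext
      · simp [projLl_block hA hB hY, projLl_inl, projRl_inl, hv]
      · simp [projRl_block hA hB hY, projRl_inl])
  have hf : ∀ v, (f v : I ⊕ J →₀ ℤ) = Finsupp.mapDomain Sum.inl (v : I →₀ ℤ) := fun _ => rfl
  have wker : ∀ w : LinearMap.ker (matHom (blockMat_rowFinite hA hB hY)),
      matHom hB (projRl I J w) = 0 := fun w => by
    rw [← projRl_block hA hB hY, w.2, map_zero]
  have wker' : ∀ w : LinearMap.ker (matHom (blockMat_rowFinite hA hB hY)),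
      matHom hA (projLl I J w) + matHom hY (projRl I J w) = 0 := fun w => by
    rw [← projLl_block hA hB hY, w.2, map_zero]
  let g0 : LinearMap.ker (matHom (blockMat_rowFinite hA hB hY)) →ₗ[ℤ]
      LinearMap.ker (matHom hB) :=
    (projRl I J ∘ₗ (LinearMap.ker _).subtype).codRestrict _ wker
  have hg0 : ∀ w, (g0 w : J →₀ ℤ) = projRl I J w := fun _ => rfl
  let g : LinearMap.ker (matHom (blockMat_rowFinite hA hB hY)) →ₗ[ℤ]
      LinearMap.ker δ.toIntLinearMap :=
    (β3.toIntLinearEquiv.toLinearMap ∘ₗ g0).codRestrict _ (fun w => by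
      rw [LinearMap.mem_ker]
      change δ (β3 (g0 w)) = 0
      rw [← qK, ← p1Y, hg0, p1_zero]
      exact ⟨- projLl I J w, by rw [map_neg]; exact neg_eq_of_add_eq_zero_right (wker' w)⟩)
  have hg : ∀ w, (g w : F3) = β3 (g0 w) := fun _ => rfl
  let g' : F2 →ₗ[ℤ] LinearMap.ker δ.toIntLinearMap :=
    γ'.toIntLinearMap.codRestrict _ fun x => (hexF3 _).2 ⟨x, rfl⟩
  have hg' : ∀ w, (g' w : F3) = γ' w := fun _ => rfl
  obtain ⟨β2, hβf, hβg⟩ := exists_mid_equiv f g ε'.toIntLinearMap g'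
    (by
      intro v v' hvv
      apply Subtype.ext
      have := congrArg (fun z => projLl I J z.1) hvv
      simpa only [hf, projLl_inl] using this)
    (by
      intro w
      constructor
      · intro hw
        have h1 : β3 (g0 w) = 0 := by rw [← hg, hw]; rfl
        have h2 : g0 w = 0 := (map_eq_zero_iff β3 β3.injective).1 h1
        have h3 : projRl I J w = 0 := by rw [← hg0, h2]; rfl
        have h4 := wker' w
        rw [h3, map_zero, add_zero] at h4
        refine ⟨⟨projLl I J w, h4⟩, Subtype.ext (sum_ext ?_ ?_)⟩
        · rw [hf, projLl_inl]
        · rw [hf, projRl_inl, h3]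
      · rintro ⟨v, rfl⟩
        apply Subtype.ext
        rw [hg]
        have : g0 (f v) = 0 := Subtype.ext (by rw [hg0, hf, projRl_inl]; rfl)
        rw [this, map_zero]; rfl)
    (by
      rintro ⟨t, ht⟩
      obtain ⟨v, rfl⟩ := β3.surjective t
      have ht' : δ (β3 v) = 0 := ht
      rw [← qK, ← p1Y, p1_zero] at ht'
      obtain ⟨r, hr⟩ := ht'
      have hv : matHom hB v = 0 := v.2
      refine ⟨⟨Finsupp.mapDomain Sum.inl (-r) + Finsupp.mapDomain Sum.inr (v : J →₀ ℤ), ?_⟩, ?_⟩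
      · rw [LinearMap.mem_ker]
        apply sum_ext
        · rw [projLl_block hA hB hY, map_add (projLl I J), map_add (projRl I J), projLl_inl, projLl_inr,
            projRl_inl, projRl_inr, add_zero, zero_add, map_neg, hr, neg_add_cancel, map_zero]
        · rw [projRl_block hA hB hY, map_add (projRl I J), projRl_inl, projRl_inr, zero_add, hv, map_zero]
      · apply Subtype.ext
        rw [hg]
        congr 1
        apply Subtype.ext
        rw [hg0, map_add, projRl_inl, projRl_inr, zero_add])
    hε'
    (by
      intro m
      rw [← Subtype.coe_inj, hg']
      exact hexF2 m)
    (by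
      rintro ⟨t, ht⟩
      obtain ⟨x, hx⟩ := (hexF3 t).1 ht
      exact ⟨x, Subtype.ext hx⟩)
    β1
  refine ⟨α2, β2, fun v => (f v).2, wker, fun v => ?_, fun w => ?_, fun u => ?_, fun w => ?_,
    fun v w hvw => ?_, fun w v hvw => ?_, fun v => ?_⟩
  · refine ⟨Finsupp.mapDomain Sum.inl v, sum_ext ?_ ?_⟩
    · rw [projLl_block hA hB hY, projLl_inl, projRl_inl, projLl_inl, map_zero, add_zero]
    · rw [projRl_block hA hB hY, projRl_inl, projRl_inl, map_zero]
  · exact ⟨projRl I J w, (projRl_block hA hB hY w).symm⟩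
  · rw [hα2, hΦ, projLl_inl, projRl_inl, map_zero, add_zero, p1_def]
  · rw [hα2, γΦ]; rfl
  · have : w = f v := Subtype.ext hvw
    rw [this, hβf]; rfl
  · have : v = g0 w := Subtype.ext hvw
    rw [this, ← hg, ← hβg, hg']
  · rw [← p1_def, p1Y, qK]

open scoped Classical in
/-- In the setting of the six-term realization theorem (exact cyclic
sequence `G1 → G2 → G3 →0 F1 → F2 → F3 → G1` with `F1, F2, F3` free, realized at the
ends by row-finite matrices `A ∈ M_{I×I'}(ℤ)`, `B ∈ M_{J×J'}(ℤ)` via `α1, β1, α3, β3`):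
if there is a row-finite `A' ∈ M_{I'×I}(ℤ)` such that every entry of `A'A − 1` is
nonnegative (the product being entrywise defined since `A'` is row-finite), then the
realizing matrix `Y ∈ M_{J×I'}(ℤ)` can be chosen with all entries nonnegative; and if
furthermore a row-finite `Z ∈ M_{J×I'}(ℤ)` is given, `Y` can be chosen with all
entries of `Y − Z` nonnegative. -/
theorem six_term_realization_nonneg {I I' J J' : Type*}
    [Countable I] [Countable I'] [Countable J] [Countable J']
    [Nonempty I] [Nonempty I'] [Nonempty J] [Nonempty J']
    {G1 G2 G3 F1 F2 F3 : Type*}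
    [AddCommGroup G1] [AddCommGroup G2] [AddCommGroup G3]
    [AddCommGroup F1] [AddCommGroup F2] [AddCommGroup F3]
    (hF1 : Module.Free ℤ F1) (hF2 : Module.Free ℤ F2) (hF3 : Module.Free ℤ F3)
    (ε : G1 →+ G2) (γ : G2 →+ G3) (ε' : F1 →+ F2) (γ' : F2 →+ F3) (δ : F3 →+ G1)
    (hexG2 : Function.Exact ⇑ε ⇑γ)
    (hexG3 : Function.Exact ⇑γ (fun _ : G3 => (0 : F1)))
    (hexF1 : Function.Exact (fun _ : G3 => (0 : F1)) ⇑ε')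
    (hexF2 : Function.Exact ⇑ε' ⇑γ')
    (hexF3 : Function.Exact ⇑γ' ⇑δ)
    (hexG1 : Function.Exact ⇑δ ⇑ε)
    {A : I → I' → ℤ} {B : J → J' → ℤ} (hA : RowFinite A) (hB : RowFinite B)
    (α1 : ((I' →₀ ℤ) ⧸ LinearMap.range (matHom hA)) ≃+ G1)
    (β1 : ↥(LinearMap.ker (matHom hA)) ≃+ F1)
    (α3 : ((J' →₀ ℤ) ⧸ LinearMap.range (matHom hB)) ≃+ G3)
    (β3 : ↥(LinearMap.ker (matHom hB)) ≃+ F3)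
    -- `A' ∈ M_{I'×I}(ℤ)` row-finite with `A'A − 1` entrywise nonnegative:
    (A' : I' → I → ℤ) (hA' : RowFinite A')
    (hpos : ∀ a b : I',
      0 ≤ (∑ i ∈ (hA' a).toFinset, A' a i * A i b) - (if a = b then 1 else 0))
    -- a further given row-finite matrix `Z ∈ M_{J×I'}(ℤ)`:
    (Z : J → I' → ℤ) (hZ : RowFinite Z) :
    -- `Y` can be chosen entrywise nonnegative:
    (∃ (Y : J → I' → ℤ) (hY : RowFinite Y), (∀ j i', 0 ≤ Y j i') ∧
      RealizesSixTerm ε γ ε' γ' δ hA hB α1 β1 α3 β3 Y hY) ∧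
    -- and `Y` can be chosen with `Y − Z` entrywise nonnegative:
    (∃ (Y : J → I' → ℤ) (hY : RowFinite Y), (∀ j i', 0 ≤ Y j i' - Z j i') ∧
      RealizesSixTerm ε γ ε' γ' δ hA hB α1 β1 α3 β3 Y hY) := by
  have hγ : Function.Surjective γ := fun x => (hexG3 x).1 rfl
  have hε' : Function.Injective ε' := by
    rw [injective_iff_map_eq_zero]
    intro x hx
    obtain ⟨_, h⟩ := (hexF1 x).1 hx
    exact h.symm
  have hl := exists_large hA A' hA' hpos
  refine ⟨?_, realization_core hF3 ε γ ε' γ' δ hexG2 hγ hε' hexF2 hexF3 hexG1 hA hB α1 β1 α3 β3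
    Z hZ hl⟩
  obtain ⟨Y, hY, h1, h2⟩ := realization_core hF3 ε γ ε' γ' δ hexG2 hγ hε' hexF2 hexF3 hexG1
    hA hB α1 β1 α3 β3 (fun _ _ => 0) (fun j => by simp) hl
  exact ⟨Y, hY, fun j i' => by simpa using h1 j i', h2⟩
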